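/- arXiv:2306.14075 — 4 statements merged into one kernel-verified Lean document; each statement's English description precedes it below -/
import Mathlib

section
/- Let X be a finite variable set and let h = ∑_{V ⊆ X} α_V·h^V be a normal polymatroid on X, where all α_V ≥ 0 and exactly c of the coefficients α_V are nonzero. Then there exists a totally uniform finite relation T with attribute set X such that |T| ≥ 2^{h(X)} / 2^c and, for all U, V ⊆ X, h_T(V|U) ≤ h(V|U), where h_T is the entropic vector of the uniform distribution on T. -/
open scoped BigOperators ENNReal

namespace JoinBounds

noncomputable section

variable {A α : Type*}

/-- The projection of a tuple `t : A → α` onto the attribute set `U`, represented as a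
partial tuple. -/
def proj [DecidableEq A] (U : Finset A) (t : A → α) : A → Option α :=
  fun x => if x ∈ U then some (t x) else none

/-- The projection of a relation `R` onto the attribute set `U`. -/
def projR [Fintype A] [DecidableEq A] [DecidableEq α] (U : Finset A) (R : Finset (A → α)) :
    Finset (A → Option α) :=
  R.image (proj U)

/-- The degree of a `U`-tuple `u` in `R`: the number of distinct `V`-tuples
appearing in `R` together with `u`. -/
def deg [Fintype A] [DecidableEq A] [DecidableEq α] (U V : Finset A) (R : Finset (A → α))
    (u : A → Option α) : ℕ :=
  (projR V (R.filter fun t => proj U t = u)).card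

/-- The `ℓ_p`-norm of the degree sequence `deg_R(V|U)`, for `p ∈ (0, ∞]`. -/
def lpNorm [Fintype A] [DecidableEq A] [DecidableEq α] (U V : Finset A) (R : Finset (A → α))
    (p : ℝ≥0∞) : ℝ :=
  if p = ⊤ then (((projR U R).sup fun u => deg U V R u : ℕ) : ℝ)
  else (∑ u ∈ projR U R, (deg U V R u : ℝ) ^ p.toReal) ^ (1 / p.toReal)

/-- The marginal probability, on the attribute set `W`, of the partial tuple `w`, under a
probability distribution `P` on the tuples of `R`. -/
def marg [Fintype A] [DecidableEq A] [DecidableEq α] (P : (A → α) → ℝ) (R : Finset (A → α))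
    (W : Finset A) (w : A → Option α) : ℝ :=
  ∑ t ∈ R.filter fun t => proj W t = w, P t

/-- The (base-2 Shannon) entropy of the marginal on the attribute set `W` of the
distribution `P` on the tuples of `R`: this is the entropic vector `h(W)`. -/
def entropy [Fintype A] [DecidableEq A] [DecidableEq α] (P : (A → α) → ℝ) (R : Finset (A → α))
    (W : Finset A) : ℝ :=
  -∑ w ∈ projR W R, marg P R W w * Real.logb 2 (marg P R W w)

/-- The step function `h^W`. -/
def stepFn {A : Type*} [DecidableEq A] (W : Finset A) : Finset A → ℝ :=
  fun U => if (U ∩ W).Nonempty then 1 else 0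

end

/-- If all fibres of the projection have the same size `k`, then the marginal is uniform. -/
lemma entropy_of_fibre {A β : Type*} [Fintype A] [DecidableEq A] [DecidableEq β]
    (T : Finset (A → β)) (hT : T.Nonempty) (W : Finset A) (k : ℕ)
    (hk : ∀ t ∈ T, (T.filter fun t' => proj W t' = proj W t).card = k) :
    (projR W T).card * k = T.card ∧
    entropy (fun t => if t ∈ T then ((T.card : ℝ))⁻¹ else 0) T W
      = Real.logb 2 ((projR W T).card) := by
  have h1 : (projR W T).card * k = T.card := by
    rw [Finset.card_eq_sum_card_image (proj W) T]
    have : ∀ b ∈ T.image (proj W), (T.filter fun t' => proj W t' = b).card = k := by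
      intro b hb
      obtain ⟨t, ht, rfl⟩ := Finset.mem_image.1 hb
      exact hk t ht
    rw [Finset.sum_congr rfl this]
    simp [projR]
  refine ⟨h1, ?_⟩
  have hTc : (T.card : ℝ) ≠ 0 := by
    have := hT.card_pos
    positivity
  have h1' : ((projR W T).card : ℝ) * k = T.card := by exact_mod_cast h1
  have hm : ((projR W T).card : ℝ) ≠ 0 := by
    intro h0
    rw [h0, zero_mul] at h1'
    exact hTc h1'.symm
  have hk0 : (k : ℝ) ≠ 0 := by
    intro h0
    rw [h0, mul_zero] at h1'
    exact hTc h1'.symm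
  have hmarg : ∀ w ∈ projR W T,
      marg (fun t => if t ∈ T then ((T.card : ℝ))⁻¹ else 0) T W w
        = ((projR W T).card : ℝ)⁻¹ := by
    intro w hw
    obtain ⟨t, ht, rfl⟩ := Finset.mem_image.1 hw
    unfold marg
    rw [Finset.sum_congr rfl (g := fun _ => ((T.card : ℝ))⁻¹)]
    · rw [Finset.sum_const, hk t ht, nsmul_eq_mul, ← h1']
      field_simp
    · intro x hx
      exact if_pos (Finset.mem_filter.1 hx).1
  unfold entropy
  rw [Finset.sum_congr rfl (g := fun _ => ((projR W T).card : ℝ)⁻¹ *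
    Real.logb 2 ((projR W T).card : ℝ)⁻¹)]
  · rw [Finset.sum_const, nsmul_eq_mul, Real.logb_inv]
    field_simp
  · intro w hw
    rw [hmarg w hw]

/-- The tuple with parameters `s`. -/
def tup {A : Type*} [DecidableEq A] {n : ℕ} (e : Finset A ≃ Fin n) (s : Finset A → ℕ) :
    A → (Fin n → ℕ) :=
  fun x i => if x ∈ e.symm i then s (e.symm i) else 0

lemma proj_tup {A : Type*} [DecidableEq A] {n : ℕ} (e : Finset A ≃ Fin n)
    (U : Finset A) (s s' : Finset A → ℕ) :
    proj U (tup e s) = proj U (tup e s') ↔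
      ∀ W : Finset A, (U ∩ W).Nonempty → s W = s' W := by
  constructor
  · rintro h W ⟨x, hx⟩
    rw [Finset.mem_inter] at hx
    have h1 := congrFun h x
    simp only [proj, if_pos hx.1, Option.some.injEq] at h1
    have h2 := congrFun h1 (e W)
    simpa [tup, hx.2] using h2
  · intro h
    funext x
    unfold proj
    split_ifs with hx
    · congr 1
      funext i
      unfold tup
      split_ifs with hi
      · exact h _ ⟨x, Finset.mem_inter.2 ⟨hx, hi⟩⟩
      · rfl
    · rfl

/-- The product relation has the expected entropies. -/
lemma product_relation {A : Type*} [Fintype A] [DecidableEq A] {n : ℕ} (e : Finset A ≃ Fin n)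
    (N : Finset A → ℕ) (hN : ∀ W, 0 < N W) (hN0 : N ∅ = 1) :
    ∃ T : Finset (A → (Fin n → ℕ)), T.card = ∏ W, N W ∧
      ∀ U : Finset A,
        entropy (fun t => if t ∈ T then ((T.card : ℝ))⁻¹ else 0) T U
            = Real.logb 2 ((projR U T).card) ∧
        (projR U T).card = ∏ W, if (U ∩ W).Nonempty then N W else 1 := by
  classical
  set S : Finset (Finset A → ℕ) := Fintype.piFinset fun W => Finset.range (N W) with hS
  have hinj : Set.InjOn (tup e) (S : Set (Finset A → ℕ)) := by
    intro s hs s' hs' hss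
    funext W
    rcases W.eq_empty_or_nonempty with rfl | hW
    · have h1 := Fintype.mem_piFinset.1 (Finset.mem_coe.1 hs) ∅
      have h2 := Fintype.mem_piFinset.1 (Finset.mem_coe.1 hs') ∅
      rw [hN0, Finset.mem_range] at h1 h2
      omega
    · refine (proj_tup e Finset.univ s s').1 (by rw [hss]) W ?_
      simpa using hW
  have hcard : (S.image (tup e)).card = ∏ W, N W := by
    rw [Finset.card_image_of_injOn hinj, hS, Fintype.card_piFinset]
    simp
  have hne : (S.image (tup e)).Nonempty := by
    rw [← Finset.card_pos, hcard]
    exact Finset.prod_pos fun W _ => hN W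
  refine ⟨S.image (tup e), hcard, fun U => ?_⟩
  have hfib : ∀ t ∈ S.image (tup e),
      ((S.image (tup e)).filter fun t' => proj U t' = proj U t).card
        = ∏ W, if (U ∩ W).Nonempty then 1 else N W := by
    intro t ht
    obtain ⟨s, hs, rfl⟩ := Finset.mem_image.1 ht
    rw [Finset.filter_image, Finset.card_image_of_injOn
      (hinj.mono (by intro x hx; exact (Finset.mem_filter.1 (Finset.mem_coe.1 hx)).1))]
    have : (S.filter fun a => proj U (tup e a) = proj U (tup e s))
        = Fintype.piFinset fun W =>
          if (U ∩ W).Nonempty then {s W} else Finset.range (N W) := by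
      ext a
      rw [Finset.mem_filter, proj_tup, hS, Fintype.mem_piFinset, Fintype.mem_piFinset]
      constructor
      · rintro ⟨h1, h2⟩ W
        split_ifs with hW
        · exact Finset.mem_singleton.2 (h2 W hW)
        · exact h1 W
      · intro h1
        have h2 : ∀ W : Finset A, (U ∩ W).Nonempty → a W = s W := by
          intro W hW
          have := h1 W
          rw [if_pos hW] at this
          exact Finset.mem_singleton.1 this
        refine ⟨fun W => ?_, h2⟩
        by_cases hW : (U ∩ W).Nonempty
        · rw [h2 W hW]
          exact Fintype.mem_piFinset.1 hs W
        · have := h1 W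
          rwa [if_neg hW] at this
    rw [this, Fintype.card_piFinset]
    refine Finset.prod_congr rfl fun W _ => ?_
    split_ifs <;> simp
  obtain ⟨h1, h2⟩ := entropy_of_fibre _ hne U _ hfib
  refine ⟨h2, ?_⟩
  have hpos : 0 < ∏ W : Finset A, if (U ∩ W).Nonempty then 1 else N W :=
    Finset.prod_pos fun W _ => by split_ifs; exacts [one_pos, hN W]
  refine Nat.eq_of_mul_eq_mul_right hpos ?_
  rw [h1, hcard, ← Finset.prod_mul_distrib]
  refine Finset.prod_congr rfl fun W _ => ?_
  split_ifs <;> simp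

/-- Every normal polymatroid `h = ∑_W α_W · h^W` with `c` nonzero coefficients
is approximated by a totally uniform relation `T` : `|T| ≥ 2^{h(X)}/2^c`, and the entropic
vector `h_T` of the uniform distribution on `T` satisfies `h_T(V|U) ≤ h(V|U)` for all `U, V`. -/
theorem normal_polymatroid_realizable {A : Type*} [Fintype A] [DecidableEq A]
    (α : Finset A → ℝ) (hα : ∀ W, 0 ≤ α W)
    (h : Finset A → ℝ) (hh : h = ∑ W : Finset A, α W • stepFn W)
    (c : ℕ) (hc : c = (Finset.univ.filter fun W : Finset A => α W ≠ 0).card) :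
    ∃ (β : Type) (_ : DecidableEq β) (T : Finset (A → β)),
      -- the entropic vector of the uniform distribution on `T`
      (∀ W : Finset A,
          entropy (fun t => if t ∈ T then ((T.card : ℝ))⁻¹ else 0) T W
            = Real.logb 2 ((projR W T).card)) ∧      -- `T` is totally uniform
      (2 : ℝ) ^ (h Finset.univ) / 2 ^ c ≤ (T.card : ℝ) ∧
      ∀ U V : Finset A,
        (entropy (fun t => if t ∈ T then ((T.card : ℝ))⁻¹ else 0) T (U ∪ V)
            - entropy (fun t => if t ∈ T then ((T.card : ℝ))⁻¹ else 0) T U)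
          ≤ h (U ∪ V) - h U := by
  classical
  have hfl : ∀ W, 1 ≤ ⌊(2 : ℝ) ^ α W⌋₊ := fun W =>
    Nat.le_floor (by simpa using Real.one_le_rpow (by norm_num : (1 : ℝ) ≤ 2) (hα W))
  let N : Finset A → ℕ := fun W => if W = ∅ then 1 else ⌊(2 : ℝ) ^ α W⌋₊
  have hN : ∀ W, 0 < N W := by
    intro W
    simp only [N]
    split_ifs
    exacts [one_pos, hfl W]
  have hlog : ∀ W, Real.logb 2 (N W) ≤ α W := by
    intro W
    have hle : (N W : ℝ) ≤ 2 ^ α W := by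
      simp only [N]
      split_ifs
      · simpa using Real.one_le_rpow (by norm_num : (1 : ℝ) ≤ 2) (hα W)
      · exact Nat.floor_le (by positivity)
    rw [Real.logb_le_iff_le_rpow (by norm_num) (by exact_mod_cast hN W)]
    exact hle
  have hhU : ∀ U, h U = ∑ W, α W * stepFn W U := by
    intro U
    rw [hh]
    simp [Finset.sum_apply]
  obtain ⟨T, hTc, hT⟩ := product_relation (Fintype.equivFin (Finset A)) N hN (by simp [N])
  have hent : ∀ U, entropy (fun t => if t ∈ T then ((T.card : ℝ))⁻¹ else 0) T U
      = ∑ W, Real.logb 2 (N W) * stepFn W U := by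
    intro U
    rw [(hT U).1, (hT U).2, Nat.cast_prod, Real.logb_prod]
    · refine Finset.sum_congr rfl fun W _ => ?_
      unfold stepFn
      split_ifs <;> simp
    · intro W _
      have := hN W
      split_ifs
      · positivity
      · simp
  refine ⟨Fin (Fintype.card (Finset A)) → ℕ, inferInstance, T, fun W => (hT W).1, ?_, ?_⟩
  · have hc2 : (2 : ℝ) ^ c = ∏ W : Finset A, if α W ≠ 0 then (2 : ℝ) else 1 := by
      rw [hc, Finset.prod_ite]
      simp
    rw [hc2, hhU, Real.rpow_sum_of_pos (by norm_num), ← Finset.prod_div_distrib, hTc,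
      Nat.cast_prod]
    refine Finset.prod_le_prod (fun W _ => ?_) fun W _ => ?_
    · split_ifs <;> positivity
    · by_cases hW : W = ∅
      · subst hW
        simp only [stepFn, N]
        split_ifs <;> norm_num at *
      · have hWn : W.Nonempty := Finset.nonempty_iff_ne_empty.2 hW
        simp only [stepFn, N, Finset.univ_inter, hWn, hW, if_true, if_false, mul_one]
        by_cases h0 : α W = 0
        · simp [h0]
        · rw [if_pos h0]
          have h1 := Nat.lt_floor_add_one ((2 : ℝ) ^ α W)
          have h2 : (1 : ℝ) ≤ (⌊(2 : ℝ) ^ α W⌋₊ : ℝ) := by exact_mod_cast hfl W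
          linarith
  · intro U V
    rw [hent, hent, hhU, hhU, ← Finset.sum_sub_distrib, ← Finset.sum_sub_distrib]
    refine Finset.sum_le_sum fun W _ => ?_
    rw [← mul_sub, ← mul_sub]
    refine mul_le_mul_of_nonneg_right (hlog W) ?_
    unfold stepFn
    split_ifs with h1 h2 h2
    · norm_num
    · norm_num
    · exact absurd (h2.mono (Finset.inter_subset_inter_right Finset.subset_union_left)) h1
    · norm_num

end JoinBounds
end

section
/- Let X = {X_1, …, X_n} be variables, let p ≥ 1 be a natural number, and let k, q_Y (for Y ⊆ X), and r_{ij} (for i ≠ j) be natural numbers. Consider the inequality ∑_{Y ⊆ X} q_Y·h(Y) + ∑_{i≠j} r_{ij}·(h({X_i}) + p·h(X_j|X_i)) ≥ k·h(X). Let G be the directed graph on vertex set X with an edge (X_i, X_j) whenever r_{ij} > 0. If G has no directed cycle of length ≤ p, then this inequality holds for all modular functions if and only if it holds for all polymatroids on X. -/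
open scoped BigOperators

namespace JoinBounds

/-- A polymatroid on the variable set `A`. -/
def IsPolymatroid {A : Type*} [DecidableEq A] (h : Finset A → ℝ) : Prop :=
  h ∅ = 0 ∧ (∀ U V : Finset A, U ⊆ V → h U ≤ h V) ∧
    ∀ U V : Finset A, h U + h V ≥ h (U ∪ V) + h (U ∩ V)

/-- A modular function on the variable set `A`: nonnegative on singletons and additive. -/
def IsModular {A : Type*} [Fintype A] [DecidableEq A] (h : Finset A → ℝ) : Prop :=
  (∀ i : A, 0 ≤ h {i}) ∧ ∀ Y : Finset A, h Y = ∑ i ∈ Y, h {i}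

/-! ### Helper lemmas -/

/-- Number of tokens entering `S`. -/
def rho {V : Type*} [Fintype V] [DecidableEq V] (m : V → V → ℕ) (S : Finset V) : ℕ :=
  ∑ u, ∑ v, if u ∉ S ∧ v ∈ S then m u v else 0

/-- Number of sets of the family missing `S`. -/
def miss {V : Type*} [Fintype V] [DecidableEq V] {k : ℕ} (A : Fin k → Finset V)
    (S : Finset V) : ℕ :=
  ∑ t, if Disjoint (A t) S then 1 else 0

lemma rho_submod {V : Type*} [Fintype V] [DecidableEq V] (m : V → V → ℕ) (S T : Finset V) :
    rho m (S ∩ T) + rho m (S ∪ T) ≤ rho m S + rho m T := by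
  unfold rho
  simp only [← Finset.sum_add_distrib]
  refine Finset.sum_le_sum fun u _ => Finset.sum_le_sum fun v _ => ?_
  by_cases h1 : u ∈ S <;> by_cases h2 : u ∈ T <;> by_cases h3 : v ∈ S <;>
    by_cases h4 : v ∈ T <;> simp [h1, h2, h3, h4]

lemma ind_supermod {V : Type*} [DecidableEq V] (A S T : Finset V) :
    (if Disjoint A S then 1 else 0) + (if Disjoint A T then 1 else 0) ≤
    (if Disjoint A (S ∩ T) then 1 else 0) + (if Disjoint A (S ∪ T) then 1 else 0) := by
  have h1 : Disjoint A S → Disjoint A (S ∩ T) :=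
    fun h => h.mono_right Finset.inter_subset_left
  have h2 : Disjoint A T → Disjoint A (S ∩ T) :=
    fun h => h.mono_right Finset.inter_subset_right
  have h3 : Disjoint A (S ∪ T) ↔ Disjoint A S ∧ Disjoint A T := Finset.disjoint_union_right
  by_cases a : Disjoint A S <;> by_cases b : Disjoint A T <;> simp_all

lemma miss_supermod {V : Type*} [Fintype V] [DecidableEq V] {k : ℕ} (A : Fin k → Finset V)
    (S T : Finset V) : miss A S + miss A T ≤ miss A (S ∩ T) + miss A (S ∪ T) := by
  unfold miss
  simp only [← Finset.sum_add_distrib]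
  exact Finset.sum_le_sum fun t _ => ind_supermod _ _ _

lemma miss_supermod_strict {V : Type*} [Fintype V] [DecidableEq V] {k : ℕ}
    (A : Fin k → Finset V) (S T : Finset V) (t : Fin k) (hS : ¬ Disjoint (A t) S)
    (hT : ¬ Disjoint (A t) T) (hST : Disjoint (A t) (S ∩ T)) :
    miss A S + miss A T < miss A (S ∩ T) + miss A (S ∪ T) := by
  unfold miss
  simp only [← Finset.sum_add_distrib]
  refine Finset.sum_lt_sum (fun t _ => ind_supermod _ _ _) ⟨t, Finset.mem_univ _, ?_⟩
  simp [hS, hT, hST]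

/-- Lovász's step in the proof of Edmonds' disjoint branchings theorem. -/
lemma exists_good_token {V : Type*} [Fintype V] [DecidableEq V] {k : ℕ}
    (A : Fin k → Finset V) (m : V → V → ℕ)
    (hinv : ∀ S : Finset V, S.Nonempty → miss A S ≤ rho m S) (t : Fin k)
    (ht : A t ≠ Finset.univ) :
    ∃ u ∈ A t, ∃ v, v ∉ A t ∧ 0 < m u v ∧
      ∀ T : Finset V, v ∈ T → u ∉ T → ¬ Disjoint (A t) T → miss A T < rho m T := by
  classical
  by_cases hex : ∃ S : Finset V, miss A S = rho m S ∧ ¬ Disjoint (A t) S ∧ ¬ S ⊆ A t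
  · obtain ⟨S, ⟨hS1, hS2, hS3⟩, hmin⟩ := WellFounded.has_min
      (wellFounded_lt (α := Finset V))
      {S : Finset V | miss A S = rho m S ∧ ¬ Disjoint (A t) S ∧ ¬ S ⊆ A t} hex
    have hne : (S \ A t).Nonempty := by
      rw [Finset.sdiff_nonempty]; exact hS3
    have hlt : miss A S < miss A (S \ A t) := by
      unfold miss
      refine Finset.sum_lt_sum (fun i _ => ?_) ⟨t, Finset.mem_univ _, ?_⟩
      · by_cases hd : Disjoint (A i) S
        · have : Disjoint (A i) (S \ A t) := hd.mono_right Finset.sdiff_subset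
          simp [hd, this]
        · simp [hd]
      · have : Disjoint (A t) (S \ A t) := Finset.disjoint_sdiff
        simp [hS2, this]
    have hlt2 : rho m S < rho m (S \ A t) := by
      have := hinv _ hne
      omega
    obtain ⟨u, -, hu⟩ := Finset.exists_lt_of_sum_lt hlt2
    obtain ⟨v, -, hv⟩ := Finset.exists_lt_of_sum_lt hu
    have hc : u ∉ S \ A t ∧ v ∈ S \ A t := by
      by_contra hc
      rw [if_neg hc] at hv
      exact Nat.not_lt_zero _ hv
    rw [if_pos hc] at hv
    have hvS := Finset.mem_sdiff.1 hc.2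
    have huS : u ∈ S := by
      by_contra huS
      simp [huS, hvS.1] at hv
    have huA : u ∈ A t := by
      by_contra huA
      exact hc.1 (Finset.mem_sdiff.2 ⟨huS, huA⟩)
    refine ⟨u, huA, v, hvS.2, by omega, fun T hvT huT hT => ?_⟩
    by_contra hcon
    have hTt : miss A T = rho m T := le_antisymm (hinv T ⟨v, hvT⟩) (not_lt.1 hcon)
    have hI := hinv (S ∩ T) ⟨v, Finset.mem_inter.2 ⟨hvS.1, hvT⟩⟩
    have hU := hinv (S ∪ T) ⟨v, Finset.mem_union_left _ hvS.1⟩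
    have hsub := rho_submod m S T
    have hsup := miss_supermod A S T
    have hdis : ¬ Disjoint (A t) (S ∩ T) := by
      intro hd
      have := miss_supermod_strict A S T t hS2 hT hd
      omega
    refine hmin (S ∩ T) ⟨by omega, hdis, fun hs =>
      hvS.2 (hs (Finset.mem_inter.2 ⟨hvS.1, hvT⟩))⟩ ?_
    refine Finset.ssubset_iff_subset_ne.2 ⟨Finset.inter_subset_left, fun he => huT ?_⟩
    have : u ∈ S ∩ T := by rw [he]; exact huS
    exact (Finset.mem_inter.1 this).2
  · have hne : (Finset.univ \ A t).Nonempty := by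
      rw [Finset.sdiff_nonempty]
      exact fun hs => ht (Finset.univ_subset_iff.1 hs)
    have h1 : 0 < miss A (Finset.univ \ A t) := by
      unfold miss
      refine Finset.sum_pos' (fun _ _ => Nat.zero_le _) ⟨t, Finset.mem_univ _, ?_⟩
      have : Disjoint (A t) (Finset.univ \ A t) := Finset.disjoint_sdiff
      simp [this]
    have h2 : 0 < rho m (Finset.univ \ A t) := lt_of_lt_of_le h1 (hinv _ hne)
    obtain ⟨u, -, hu⟩ := Finset.exists_ne_zero_of_sum_ne_zero (show _ ≠ 0 from h2.ne')
    obtain ⟨v, -, hv⟩ := Finset.exists_ne_zero_of_sum_ne_zero hu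
    have hc : u ∉ Finset.univ \ A t ∧ v ∈ Finset.univ \ A t := by
      by_contra hc
      rw [if_neg hc] at hv
      exact hv rfl
    rw [if_pos hc] at hv
    simp only [Finset.mem_sdiff, Finset.mem_univ, true_and, not_not] at hc
    refine ⟨u, hc.1, v, hc.2, Nat.pos_of_ne_zero hv, fun T hvT huT hT => ?_⟩
    refine lt_of_le_of_ne (hinv T ⟨v, hvT⟩) fun he => hex ⟨T, he, hT, fun hs => hc.2 (hs hvT)⟩

/-- Inequality version of Edmonds' disjoint branchings theorem. -/
lemma edmonds_ineq {V : Type*} [Fintype V] [DecidableEq V] {k : ℕ}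
    (H : Finset V → ℝ) (hH : IsPolymatroid H) (N : ℕ) :
    ∀ (A : Fin k → Finset V) (m : V → V → ℕ), (∑ u, ∑ v, m u v) ≤ N →
    (∀ S : Finset V, S.Nonempty → miss A S ≤ rho m S) →
    (k : ℝ) * H Finset.univ ≤ (∑ t, H (A t)) + ∑ u, ∑ v, (m u v : ℝ) * (H {u, v} - H {u}) := by
  have hcond : ∀ u v, 0 ≤ H {u, v} - H {u} := fun u v =>
    sub_nonneg.2 (hH.2.1 _ _ (by simp))
  have hdone : ∀ (A : Fin k → Finset V) (m : V → V → ℕ), (∀ t, A t = Finset.univ) →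
      (k : ℝ) * H Finset.univ ≤
        (∑ t, H (A t)) + ∑ u, ∑ v, (m u v : ℝ) * (H {u, v} - H {u}) := by
    intro A m hA
    have : 0 ≤ ∑ u, ∑ v, (m u v : ℝ) * (H {u, v} - H {u}) :=
      Finset.sum_nonneg fun u _ => Finset.sum_nonneg fun v _ =>
        mul_nonneg (Nat.cast_nonneg _) (hcond u v)
    simp [hA]
    simpa using this
  induction N with
  | zero =>
    intro A m hm hinv
    by_cases hall : ∀ t, A t = Finset.univ
    · exact hdone A m hall
    push Not at hall
    obtain ⟨t, ht⟩ := hall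
    obtain ⟨u, -, v, -, hpos, -⟩ := exists_good_token A m hinv t ht
    have h1 : m u v ≤ ∑ v, m u v :=
      Finset.single_le_sum (f := fun v => m u v) (fun _ _ => Nat.zero_le _) (Finset.mem_univ v)
    have h2 : ∑ v, m u v ≤ ∑ u, ∑ v, m u v :=
      Finset.single_le_sum (f := fun u => ∑ v, m u v) (fun _ _ => Nat.zero_le _)
        (Finset.mem_univ u)
    omega
  | succ N ih =>
    intro A m hm hinv
    by_cases hall : ∀ t, A t = Finset.univ
    · exact hdone A m hall
    push Not at hall
    obtain ⟨t, ht⟩ := hall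
    obtain ⟨u, huA, v, hvA, hpos, hgood⟩ := exists_good_token A m hinv t ht
    set A' : Fin k → Finset V := fun s => if s = t then insert v (A t) else A s with hA'
    set m' : V → V → ℕ := fun a b => m a b - if a = u ∧ b = v then 1 else 0 with hm'
    have hmm : ∀ a b, m a b = m' a b + if a = u ∧ b = v then 1 else 0 := by
      intro a b
      simp only [hm']
      split_ifs with hab
      · obtain ⟨rfl, rfl⟩ := hab
        omega
      · rfl
    have hone : ∀ f : V → V → ℝ,
        ∑ a, ∑ b, (if a = u ∧ b = v then f a b else 0) = f u v := by
      intro f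
      simp [ite_and]
    have honeN : ∀ f : V → V → ℕ,
        ∑ a, ∑ b, (if a = u ∧ b = v then f a b else 0) = f u v := by
      intro f
      simp [ite_and]
    have hsum : (∑ a, ∑ b, m a b) = (∑ a, ∑ b, m' a b) + 1 := by
      rw [← honeN fun _ _ => 1]
      simp only [← Finset.sum_add_distrib]
      exact Finset.sum_congr rfl fun a _ => Finset.sum_congr rfl fun b _ => hmm a b
    have hval : (∑ a, ∑ b, (m a b : ℝ) * (H {a, b} - H {a})) =
        (∑ a, ∑ b, (m' a b : ℝ) * (H {a, b} - H {a})) + (H {u, v} - H {u}) := by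
      rw [← hone fun a b => (H {a, b} - H {a})]
      simp only [← Finset.sum_add_distrib]
      refine Finset.sum_congr rfl fun a _ => Finset.sum_congr rfl fun b _ => ?_
      rw [hmm a b]
      push_cast
      split_ifs <;> ring
    have hAval : (∑ s, H (A' s)) = (∑ s, H (A s)) + (H (insert v (A t)) - H (A t)) := by
      have : (H (insert v (A t)) - H (A t)) =
          ∑ s, if s = t then (H (insert v (A t)) - H (A t)) else 0 := by simp
      rw [this, ← Finset.sum_add_distrib]
      refine Finset.sum_congr rfl fun s _ => ?_
      simp only [hA']
      split_ifs with hs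
      · subst hs; ring
      · ring
    have hsubm : H (insert v (A t)) + H {u} ≤ H (A t) + H {u, v} := by
      have := hH.2.2 (A t) {u, v}
      have e1 : A t ∪ {u, v} = insert v (A t) := by
        ext x
        simp only [Finset.mem_union, Finset.mem_insert, Finset.mem_singleton]
        constructor
        · rintro (h | rfl | rfl) <;> simp [*]
        · rintro (h | h) <;> simp [*]
      have e2 : A t ∩ {u, v} = {u} := by
        ext x
        simp only [Finset.mem_inter, Finset.mem_insert, Finset.mem_singleton]
        constructor
        · rintro ⟨h, rfl | rfl⟩
          · rfl
          · exact absurd h hvA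
        · rintro rfl; simp [huA]
      rw [e1, e2] at this
      linarith
    have hinv' : ∀ S : Finset V, S.Nonempty → miss A' S ≤ rho m' S := by
      intro S hS
      have hr : rho m S = rho m' S + if u ∉ S ∧ v ∈ S then 1 else 0 := by
        unfold rho
        rw [← honeN fun a b => if a ∉ S ∧ b ∈ S then 1 else 0]
        simp only [← Finset.sum_add_distrib]
        refine Finset.sum_congr rfl fun a _ => Finset.sum_congr rfl fun b _ => ?_
        rw [hmm a b]
        split_ifs <;> simp
      have hms : miss A' S + (if Disjoint (A t) S ∧ v ∈ S then 1 else 0) = miss A S := by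
        unfold miss
        have : (if Disjoint (A t) S ∧ v ∈ S then 1 else 0) =
            ∑ s, if s = t then (if Disjoint (A t) S ∧ v ∈ S then 1 else 0) else 0 := by simp
        rw [this, ← Finset.sum_add_distrib]
        refine Finset.sum_congr rfl fun s _ => ?_
        simp only [hA']
        by_cases hs : s = t
        · subst hs
          by_cases h1 : Disjoint (A s) S <;> by_cases h2 : v ∈ S <;> simp [h1, h2]
        · simp [hs]
      have h0 := hinv S hS
      by_cases hv : v ∈ S
      · by_cases hu : u ∈ S
        · simp [hu] at hr
          omega
        · by_cases hd : Disjoint (A t) S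
          · simp [hd, hv, hu] at hr hms
            omega
          · have := hgood S hv hu hd
            simp [hd, hv, hu] at hr hms
            omega
      · simp [hv] at hr hms
        omega
    have := ih A' m' (by omega) hinv'
    linarith

/-- Uncrossing one set into a chain. -/
lemma chain_step {V : Type*} [DecidableEq V] [Fintype V] (h : Finset V → ℝ)
    (hh : IsPolymatroid h) (f : V → ℕ) (Y : Finset V) (K : ℕ) :
    (∑ t ∈ Finset.range K, h (Finset.univ.filter fun v => t < f v + if v ∈ Y then 1 else 0)) +
      h (Y ∩ Finset.univ.filter fun v => K ≤ f v)
    ≤ (∑ t ∈ Finset.range K, h (Finset.univ.filter fun v => t < f v)) + h Y := by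
  induction K with
  | zero => simp
  | succ K ih =>
    rw [Finset.sum_range_succ, Finset.sum_range_succ]
    have := hh.2.2 (Finset.univ.filter fun v => K < f v)
      (Y ∩ Finset.univ.filter fun v => K ≤ f v)
    have e1 : (Finset.univ.filter fun v => K < f v) ∪ (Y ∩ Finset.univ.filter fun v => K ≤ f v)
        = Finset.univ.filter fun v => K < f v + if v ∈ Y then 1 else 0 := by
      ext v
      by_cases hv : v ∈ Y <;> simp [hv] <;> omega
    have e2 : (Finset.univ.filter fun v => K < f v) ∩ (Y ∩ Finset.univ.filter fun v => K ≤ f v)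
        = Y ∩ Finset.univ.filter fun v => K + 1 ≤ f v := by
      ext v
      by_cases hv : v ∈ Y <;> simp [hv] <;> omega
    rw [e1, e2] at this
    linarith

lemma poly_nonneg {V : Type*} [DecidableEq V] {h : Finset V → ℝ}
    (hh : IsPolymatroid h) (Y : Finset V) : 0 ≤ h Y := by
  have := hh.2.1 ∅ Y (Finset.empty_subset _)
  rw [hh.1] at this
  exact this

lemma chain_mul {V : Type*} [DecidableEq V] [Fintype V] (h : Finset V → ℝ)
    (hh : IsPolymatroid h) (f : V → ℕ) (Y : Finset V) (K c : ℕ) :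
    (∑ t ∈ Finset.range K, h (Finset.univ.filter fun v => t < f v + if v ∈ Y then c else 0))
    ≤ (∑ t ∈ Finset.range K, h (Finset.univ.filter fun v => t < f v)) + c * h Y := by
  induction c with
  | zero => simp
  | succ c ih =>
    have := chain_step h hh (fun v => f v + if v ∈ Y then c else 0) Y K
    have h0 := poly_nonneg hh
      (Y ∩ Finset.univ.filter fun v => K ≤ f v + if v ∈ Y then c else 0)
    have e : ∀ v, f v + (if v ∈ Y then c + 1 else 0) =
        (f v + if v ∈ Y then c else 0) + if v ∈ Y then 1 else 0 := by
      intro v; split_ifs <;> ring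
    simp only [e]
    push_cast
    linarith

lemma chain_sum {V : Type*} [DecidableEq V] [Fintype V] (h : Finset V → ℝ)
    (hh : IsPolymatroid h) (q : Finset V → ℕ) (K : ℕ) (s : Finset (Finset V)) :
    (∑ t ∈ Finset.range K,
      h (Finset.univ.filter fun v => t < ∑ Y ∈ s, if v ∈ Y then q Y else 0))
    ≤ ∑ Y ∈ s, (q Y : ℝ) * h Y := by
  induction s using Finset.induction_on with
  | empty => simp [hh.1]
  | insert Y s hY ih =>
    have := chain_mul h hh (fun v => ∑ Y ∈ s, if v ∈ Y then q Y else 0) Y K (q Y)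
    simp only [Finset.sum_insert hY]
    simp only [add_comm (if _ ∈ Y then q Y else 0)]
    linarith

/-- A set in which every vertex has a predecessor contains a short closed walk. -/
lemma card_of_pred {n p : ℕ} (E : Fin n → Fin n → Prop)
    (hgirth : ∀ ℓ : ℕ, 1 ≤ ℓ → ℓ ≤ p → ∀ c : ℕ → Fin n, (∀ t, c (t + ℓ) = c t) →
      ¬ ∀ t, E (c t) (c (t + 1)))
    (S : Finset (Fin n)) (hS : S.Nonempty) (hpred : ∀ v ∈ S, ∃ u ∈ S, E u v) :
    p + 1 ≤ S.card := by
  by_contra hcard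
  choose! f hfS hfE using hpred
  obtain ⟨x0, hx0⟩ := hS
  have hit : ∀ i, f^[i] x0 ∈ S := by
    intro i
    induction i with
    | zero => exact hx0
    | succ i ih => rw [Function.iterate_succ_apply']; exact hfS _ ih
  obtain ⟨i, hi, j, hj, hij, heq⟩ := Finset.exists_ne_map_eq_of_card_lt_of_maps_to
    (s := Finset.range (S.card + 1)) (t := S) (by simp) (f := fun i => f^[i] x0)
    (fun i _ => hit i)
  wlog hlt : i < j generalizing i j
  · exact this j hj i hi hij.symm heq.symm (by omega)
  simp only [Finset.mem_range] at hi hj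
  obtain ⟨ℓ, rfl⟩ : ∃ ℓ, j = ℓ + i := ⟨j - i, by omega⟩
  have hx : f^[ℓ] (f^[i] x0) = f^[i] x0 := by
    rw [← Function.iterate_add_apply]; exact heq.symm
  have hℓ : 1 ≤ ℓ := by omega
  refine hgirth ℓ hℓ (by omega) (fun t => f^[ℓ - t % ℓ] (f^[i] x0)) ?_ ?_
  · intro t
    simp
  · intro t
    have key : f (f^[ℓ - (t + 1) % ℓ] (f^[i] x0)) = f^[ℓ - t % ℓ] (f^[i] x0) := by
      have hm : t % ℓ < ℓ := Nat.mod_lt _ (by omega)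
      rw [← Function.iterate_succ_apply' f]
      by_cases hc : t % ℓ + 1 = ℓ
      · have : (t + 1) % ℓ = 0 := by
          rw [← Nat.mod_add_mod, hc, Nat.mod_self]
        rw [this, Nat.sub_zero, Function.iterate_succ_apply', hx]
        have : ℓ - t % ℓ = 1 := by omega
        rw [this]; rfl
      · have : (t + 1) % ℓ = t % ℓ + 1 := by
          rw [← Nat.mod_add_mod]
          exact Nat.mod_eq_of_lt (by omega)
        rw [this]
        congr 2
        omega
    have hmem : f^[ℓ - (t + 1) % ℓ] (f^[i] x0) ∈ S := by
      rw [← Function.iterate_add_apply]; exact hit _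
    have := hfE _ hmem
    rw [key] at this
    exact this

/-- The counting argument. `R` is the multiplicity matrix. -/
lemma count_bound {n p : ℕ} (R : Fin n → Fin n → ℕ) (S : Finset (Fin n)) (hS : S.Nonempty)
    (hp : 1 ≤ p)
    (hcard : (∀ v ∈ S, ∃ u ∈ S, 0 < R u v) → p + 1 ≤ S.card) (c : ℕ)
    (hc : ∀ v ∈ S, c ≤ (∑ j, R v j) + p * ∑ i, R i v) :
    c ≤ (∑ v ∈ S, ∑ j, R v j) + p * ∑ i ∈ Sᶜ, ∑ v ∈ S, R i v := by
  by_cases hall : ∀ v ∈ S, ∃ u ∈ S, 0 < R u v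
  · have hcd := hcard hall
    have h1 : S.card * c ≤ ∑ v ∈ S, ((∑ j, R v j) + p * ∑ i, R i v) := by
      rw [← smul_eq_mul]
      exact Finset.card_nsmul_le_sum _ _ _ hc
    rw [Finset.sum_add_distrib, ← Finset.mul_sum, Finset.sum_comm (s := S) (t := Finset.univ)
      (f := fun v i => R i v), ← Finset.sum_add_sum_compl S] at h1
    have h2 : ∑ i ∈ S, ∑ v ∈ S, R i v ≤ ∑ v ∈ S, ∑ j, R v j :=
      Finset.sum_le_sum fun i _ => Finset.sum_le_sum_of_subset (Finset.subset_univ _)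
    set W := ∑ v ∈ S, ∑ j, R v j
    set I := ∑ i ∈ S, ∑ v ∈ S, R i v
    set E := ∑ i ∈ Sᶜ, ∑ v ∈ S, R i v
    have h3 : (p + 1) * c ≤ S.card * c := Nat.mul_le_mul_right _ hcd
    have h4 : p * I ≤ p * W := Nat.mul_le_mul_left _ h2
    have h5 : 0 ≤ p * (p * E) := Nat.zero_le _
    refine le_of_mul_le_mul_left (a := p + 1) ?_ (Nat.succ_pos p)
    nlinarith
  · push Not at hall
    obtain ⟨v, hv, hv0⟩ := hall
    have h0 := hc v hv
    have h1 : ∑ j, R v j ≤ ∑ v ∈ S, ∑ j, R v j :=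
      Finset.single_le_sum (f := fun v => ∑ j, R v j) (fun _ _ => Nat.zero_le _) hv
    have h2 : ∑ i, R i v ≤ ∑ i ∈ Sᶜ, ∑ v ∈ S, R i v := by
      rw [← Finset.sum_add_sum_compl S,
        Finset.sum_eq_zero (s := S) fun i hi => Nat.le_zero.1 (hv0 i hi), zero_add]
      exact Finset.sum_le_sum fun i _ =>
        Finset.single_le_sum (f := fun v => R i v) (fun _ _ => Nat.zero_le _) hv
    have h3 := Nat.mul_le_mul_left p h2
    omega

lemma modular_isPolymatroid {n : ℕ} {h : Finset (Fin n) → ℝ} (hh : IsModular h) :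
    IsPolymatroid h := by
  refine ⟨by rw [hh.2]; simp, fun U V hUV => ?_, fun U V => ?_⟩
  · rw [hh.2 U, hh.2 V]
    exact Finset.sum_le_sum_of_subset_of_nonneg hUV fun i _ _ => hh.1 i
  · rw [hh.2 U, hh.2 V, hh.2 (U ∪ V), hh.2 (U ∩ V), Finset.sum_union_inter]

lemma eraseNone_isPolymatroid {n : ℕ} {h : Finset (Fin n) → ℝ} (hh : IsPolymatroid h) :
    IsPolymatroid (fun A : Finset (Option (Fin n)) => h (Finset.eraseNone A)) := by
  refine ⟨by simpa using hh.1, fun U V hUV => hh.2.1 _ _ (Finset.eraseNone.monotone hUV),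
    fun U V => ?_⟩
  have := hh.2.2 (Finset.eraseNone U) (Finset.eraseNone V)
  simpa [Finset.eraseNone_union, Finset.eraseNone_inter] using this

/-- Main inequality. -/
lemma main_ineq {n p k : ℕ} (hp : 1 ≤ p) (q : Finset (Fin n) → ℕ) (R : Fin n → Fin n → ℕ)
    (hcard : ∀ S : Finset (Fin n), S.Nonempty → (∀ v ∈ S, ∃ u ∈ S, 0 < R u v) → p + 1 ≤ S.card)
    (hdeg : ∀ v, k ≤ (∑ Y, if v ∈ Y then q Y else 0) + ((∑ j, R v j) + p * ∑ i, R i v))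
    (h : Finset (Fin n) → ℝ) (hh : IsPolymatroid h) :
    (k : ℝ) * h Finset.univ ≤ (∑ Y, (q Y : ℝ) * h Y) +
      ∑ i, ∑ j, (R i j : ℝ) * (h {i} + (p : ℝ) * (h {i, j} - h {i})) := by
  set Q : Fin n → ℕ := fun v => ∑ Y, if v ∈ Y then q Y else 0 with hQ
  set m : Option (Fin n) → Option (Fin n) → ℕ := fun a b =>
    match a, b with
    | _, none => 0
    | none, some v => ∑ j, R v j
    | some i, some j => p * R i j with hm
  set A : Fin k → Finset (Option (Fin n)) := fun t =>
    Finset.insertNone (Finset.univ.filter fun v => (t : ℕ) < Q v) with hA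
  have hinv : ∀ S : Finset (Option (Fin n)), S.Nonempty → miss A S ≤ rho m S := by
    intro S hS
    by_cases hn : none ∈ S
    · have : miss A S = 0 := by
        unfold miss
        refine Finset.sum_eq_zero fun t _ => ?_
        rw [if_neg]
        exact Finset.not_disjoint_iff.2 ⟨none, by simp [hA], hn⟩
      omega
    · have hrho : rho m S = (∑ v ∈ Finset.eraseNone S, ∑ j, R v j) +
          p * ∑ i ∈ (Finset.eraseNone S)ᶜ, ∑ v ∈ Finset.eraseNone S, R i v := by
        unfold rho
        rw [Fintype.sum_option]
        simp only [Fintype.sum_option, hn, hm]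
        simp only [Finset.mul_sum, ← Finset.sum_filter]
        congr 1
        · simp only [not_false_eq_true, true_and, and_false, if_false, zero_add]
          refine Finset.sum_congr ?_ fun _ _ => rfl
          ext x; simp
        · simp only [and_false, if_false, zero_add, ite_and]
          rw [← Finset.sum_filter_add_sum_filter_not Finset.univ (fun i => some i ∉ S)]
          rw [Finset.sum_eq_zero (s := Finset.univ.filter fun i => ¬ some i ∉ S), add_zero]
          · refine Finset.sum_congr ?_ fun i hi => ?_
            · ext x; simp
            · have hi' : some i ∉ S := by simpa using hi
              simp only [hi', not_false_eq_true, true_and]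
              refine Finset.sum_congr ?_ fun _ _ => rfl
              ext x; simp
          · intro i hi
            have hi' : some i ∈ S := by simpa using hi
            simp [hi']
      rw [hrho]
      have hne : (Finset.eraseNone S).Nonempty := by
        obtain ⟨x, hx⟩ := hS
        cases x with
        | none => exact absurd hx hn
        | some v => exact ⟨v, by simpa using hx⟩
      refine count_bound R _ hne hp (hcard _ hne) _ fun v hv => ?_
      have hd := hdeg v
      have hmiss : miss A S ≤ k - Q v := by
        unfold miss
        rw [← Finset.card_filter]
        have : (Finset.univ.filter fun t => Disjoint (A t) S).card ≤
            (Finset.Ico (Q v) k).card := by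
          refine Finset.card_le_card_of_injOn (fun t => (t : ℕ)) ?_
            (fun a _ b _ hab => Fin.ext hab)
          intro t ht
          simp only [Finset.coe_filter, Finset.mem_univ, true_and, Set.mem_setOf_eq] at ht
          simp only [Finset.coe_Ico, Set.mem_Ico]
          refine ⟨?_, t.2⟩
          by_contra hlt
          have hmem : some v ∈ A t := by
            simp [hA]
            omega
          exact Finset.disjoint_left.1 ht hmem (by simpa using hv)
        simpa using this
      change k ≤ Q v + _ at hd
      omega
  have hmain := edmonds_ineq _ (eraseNone_isPolymatroid hh) _ A m le_rfl hinv
  have hchain := chain_sum h hh q k Finset.univ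
  have e1 : (∑ t, h (Finset.eraseNone (A t))) =
      ∑ t ∈ Finset.range k, h (Finset.univ.filter fun v => t < Q v) := by
    rw [← Fin.sum_univ_eq_sum_range (fun t => h (Finset.univ.filter fun v => t < Q v))]
    simp [hA]
  have eu : Finset.eraseNone (Finset.univ : Finset (Option (Fin n))) = Finset.univ := by
    ext x; simp
  have e2 : ∀ i j : Fin n, Finset.eraseNone {some i, some j} = {i, j} := by
    intro i j; ext x; simp
  have e3 : ∀ i : Fin n, Finset.eraseNone {some i} = {i} := by
    intro i; ext x; simp
  have e4 : ∀ i : Fin n, Finset.eraseNone {none, some i} = {i} := by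
    intro i; ext x; simp
  have e5 : Finset.eraseNone ({none} : Finset (Option (Fin n))) = ∅ := by
    ext x; simp
  simp only [Fintype.sum_option, hm, e1, eu, e2, e3, e4, e5, hh.1] at hmain
  have e6 : ∑ i, ∑ j, (R i j : ℝ) * (h {i} + (p : ℝ) * (h {i, j} - h {i})) =
      (∑ i, ((∑ j, R i j : ℕ) : ℝ) * h {i}) +
        ∑ i, ∑ j, ((p * R i j : ℕ) : ℝ) * (h {i, j} - h {i}) := by
    rw [← Finset.sum_add_distrib]
    refine Finset.sum_congr rfl fun i _ => ?_
    push_cast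
    rw [Finset.sum_mul, ← Finset.sum_add_distrib]
    exact Finset.sum_congr rfl fun j _ => by ring
  rw [e6]
  simp only [Nat.cast_zero, zero_mul, zero_add, sub_zero] at hmain
  change ∑ t ∈ Finset.range k, h (Finset.univ.filter fun v => t < Q v) ≤ _ at hchain
  linarith

/-- Consider the inequality
`∑_Y q_Y·h(Y) + ∑_{i≠j} r_{ij}·(h(X_i) + p·h(X_j|X_i)) ≥ k·h(X)` with natural-number
coefficients.  If the directed graph with an edge `(i, j)` whenever `r i j > 0` (for `i ≠ j`)
has no directed cycle of length `≤ p` (formalized as: no closed walk of period `ℓ ≤ p` all of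
whose steps are edges), then the inequality holds for all modular functions iff it holds for
all polymatroids. -/
theorem modular_iff_polymatroid_of_girth (n : ℕ) (p : ℕ) (hp : 1 ≤ p) (k : ℕ)
    (q : Finset (Fin n) → ℕ) (r : Fin n → Fin n → ℕ)
    (hgirth : ∀ ℓ : ℕ, 1 ≤ ℓ → ℓ ≤ p → ∀ c : ℕ → Fin n, (∀ t, c (t + ℓ) = c t) →
      ¬ ∀ t, c t ≠ c (t + 1) ∧ 0 < r (c t) (c (t + 1))) :
    ((∀ h : Finset (Fin n) → ℝ, IsModular h →
        (∑ Y : Finset (Fin n), (q Y : ℝ) * h Y) +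
          (∑ i : Fin n, ∑ j ∈ Finset.univ.erase i,
            (r i j : ℝ) * (h {i} + (p : ℝ) * (h {i, j} - h {i})))
          ≥ (k : ℝ) * h Finset.univ)
      ↔
      (∀ h : Finset (Fin n) → ℝ, IsPolymatroid h →
        (∑ Y : Finset (Fin n), (q Y : ℝ) * h Y) +
          (∑ i : Fin n, ∑ j ∈ Finset.univ.erase i,
            (r i j : ℝ) * (h {i} + (p : ℝ) * (h {i, j} - h {i})))
          ≥ (k : ℝ) * h Finset.univ)) := by
  constructor
  · intro hmod h hh
    set R : Fin n → Fin n → ℕ := fun i j => if i = j then 0 else r i j with hR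
    have hconv : ∀ F : Fin n → Fin n → ℝ, (∑ i : Fin n, ∑ j ∈ Finset.univ.erase i,
        (r i j : ℝ) * F i j) = ∑ i, ∑ j, (R i j : ℝ) * F i j := by
      intro F
      refine Finset.sum_congr rfl fun i _ => ?_
      rw [← Finset.add_sum_erase _ _ (Finset.mem_univ i)]
      simp only [hR, if_true, Nat.cast_zero, zero_mul, zero_add]
      refine Finset.sum_congr rfl fun j hj => ?_
      rw [if_neg (Finset.ne_of_mem_erase hj).symm]
    rw [hconv fun i j => h {i} + (p : ℝ) * (h {i, j} - h {i})]
    refine main_ineq hp q R ?_ ?_ h hh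
    · intro S hS hpred
      refine card_of_pred (fun i j => i ≠ j ∧ 0 < r i j) hgirth S hS fun v hv => ?_
      obtain ⟨u, hu, hpos⟩ := hpred v hv
      refine ⟨u, hu, ?_⟩
      simp only [hR] at hpos
      split_ifs at hpos with he
      · omega
      · exact ⟨he, hpos⟩
    · intro v
      have hv := hmod (fun Y => if v ∈ Y then 1 else 0) (by
        refine ⟨fun i => by dsimp only; split_ifs <;> norm_num, fun Y => ?_⟩
        simp)
      rw [hconv fun i j => (if v ∈ ({i} : Finset (Fin n)) then (1 : ℝ) else 0) +
        (p : ℝ) * ((if v ∈ ({i, j} : Finset (Fin n)) then (1 : ℝ) else 0) -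
          (if v ∈ ({i} : Finset (Fin n)) then (1 : ℝ) else 0))] at hv
      have e : ∀ i j, (R i j : ℝ) * ((if v ∈ ({i} : Finset (Fin n)) then (1 : ℝ) else 0) +
        (p : ℝ) * ((if v ∈ ({i, j} : Finset (Fin n)) then (1 : ℝ) else 0) -
          (if v ∈ ({i} : Finset (Fin n)) then (1 : ℝ) else 0))) =
          (if v = i then (R i j : ℝ) else 0) + p * (if v = j then (R i j : ℝ) else 0) := by
        intro i j
        by_cases hij : i = j
        · simp [hR, hij]
        · by_cases h1 : v = i
          · subst h1; simp [hij]
          · by_cases h2 : v = j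
            · subst h2
              simp [h1]
              ring
            · simp [h1, h2]
      simp only [e, Finset.sum_add_distrib, ← Finset.mul_sum] at hv
      rw [Finset.sum_comm (f := fun i j => if v = i then (R i j : ℝ) else 0)] at hv
      simp at hv
      have : (k : ℝ) ≤ (((∑ Y, if v ∈ Y then q Y else 0) +
          ((∑ j, R v j) + p * ∑ i, R i v) : ℕ) : ℝ) := by
        push_cast
        exact hv
      exact_mod_cast this
  · intro hpoly h hh
    exact hpoly h (modular_isPolymatroid hh)

end JoinBounds
end

section
/- Let h be a polymatroid on X = {X_1, …, X_n}, and define h' by h'({X_i}) := h(X_i | X_1 X_2 ⋯ X_{i−1}) for each i, and h'(Y) := ∑_{X_i ∈ Y} h'({X_i}) for every Y ⊆ X. Then h' is a modular function and satisfies: h'(X) = h(X); h'(Y) ≤ h(Y) for every Y ⊆ X; and h'(X_j|X_i) ≤ h(X_j|X_i) for all i < j. -/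
open scoped BigOperators

namespace JoinBounds

/-- **modularization lemma.** Given a polymatroid `h` on `{X_1, …, X_n}` and the
modularization `h'` defined by `h'({X_i}) = h(X_i | X_1 ⋯ X_{i-1})` and
`h'(Y) = ∑_{X_i ∈ Y} h'({X_i})`, the function `h'` is modular and satisfies
`h'(X) = h(X)`, `h'(Y) ≤ h(Y)` for all `Y`, and `h'(X_j|X_i) ≤ h(X_j|X_i)` for `i < j`. -/
theorem modularization (n : ℕ) (h : Finset (Fin n) → ℝ) (hpoly : IsPolymatroid h)
    (h' : Finset (Fin n) → ℝ)
    (hdef : ∀ Y : Finset (Fin n), h' Y = ∑ i ∈ Y, (h (Finset.Iic i) - h (Finset.Iio i))) :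
    (∀ i : Fin n, 0 ≤ h' {i}) ∧
    (∀ Y : Finset (Fin n), h' Y = ∑ i ∈ Y, h' {i}) ∧
    h' Finset.univ = h Finset.univ ∧
    (∀ Y : Finset (Fin n), h' Y ≤ h Y) ∧
    (∀ i j : Fin n, i < j → h' {i, j} - h' {i} ≤ h {i, j} - h {i}) := by
  obtain ⟨h0, hmono, hsub⟩ := hpoly
  have key : ∀ (a : Fin n) (s : Finset (Fin n)), (∀ x ∈ s, x < a) →
      h (Finset.Iic a) - h (Finset.Iio a) ≤ h (insert a s) - h s := by
    intro a s hs
    have h1 := hsub (insert a s) (Finset.Iio a)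
    have e1 : insert a s ∪ Finset.Iio a = Finset.Iic a := by
      ext x
      simp only [Finset.mem_union, Finset.mem_insert, Finset.mem_Iio, Finset.mem_Iic]
      have := hs x
      grind
    have e2 : insert a s ∩ Finset.Iio a = s := by
      ext x
      simp only [Finset.mem_inter, Finset.mem_insert, Finset.mem_Iio]
      have := hs x
      grind
    rw [e1, e2] at h1
    linarith
  have low : ∀ Y : Finset (Fin n), (∀ x ∈ Y, ∀ y, y < x → y ∈ Y) → h' Y = h Y := by
    intro Y
    induction Y using Finset.induction_on_max with
    | empty => intro _; rw [hdef, h0]; simp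
    | insert a s hs ih =>
      intro hl
      have hn : a ∉ s := fun ha => lt_irrefl _ (hs a ha)
      have e1 : s = Finset.Iio a := by
        ext x
        simp only [Finset.mem_Iio]
        have h1 := hs x
        have h2 := hl a (by simp) x
        grind
      have e2 : insert a s = Finset.Iic a := by
        rw [e1]
        ext x
        simp only [Finset.mem_insert, Finset.mem_Iio, Finset.mem_Iic]
        grind
      have h3 := ih (by
        rw [e1]
        intro x hx y hy
        simp only [Finset.mem_Iio] at *
        exact hy.trans hx)
      have h4 : h' (insert a s) = (h (Finset.Iic a) - h (Finset.Iio a)) + h' s := by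
        rw [hdef, hdef, Finset.sum_insert hn]
      rw [h4, h3, e2, ← e1]
      ring
  refine ⟨?_, ?_, low _ (by simp), ?_, ?_⟩
  · intro i
    rw [hdef, Finset.sum_singleton]
    exact sub_nonneg.2 (hmono _ _ Finset.Iio_subset_Iic_self)
  · intro Y
    simp only [hdef, Finset.sum_singleton]
  · intro Y
    induction Y using Finset.induction_on_max with
    | empty => rw [hdef, h0]; simp
    | insert a s hs ih =>
      have hn : a ∉ s := fun ha => lt_irrefl _ (hs a ha)
      have h4 : h' (insert a s) = (h (Finset.Iic a) - h (Finset.Iio a)) + h' s := by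
        rw [hdef, hdef, Finset.sum_insert hn]
      have := key a s hs
      linarith
  · intro i j hij
    have := key j {i} (by simpa using hij)
    rw [Finset.pair_comm i j, hdef, hdef, Finset.sum_pair hij.ne', Finset.sum_singleton]
    linarith

end JoinBounds
end

section
/- Let R and S be finite binary relations and let Q = {(x, y, z) : (x, y) ∈ R and (y, z) ∈ S} be their join. Let p > 0 and q > 1 be reals with 1/p + 1/q ≤ 1. Then |Q| ≤ ||deg_R(X|Y)||_p · ||deg_S(Z|Y)||_q^{q/(p(q−1))} · |S|^{1 − q/(p(q−1))}. -/
open scoped BigOperators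

namespace JoinBounds

noncomputable section

variable {α β γ : Type*}

/-- Degree of the value `y` in the second coordinate of the binary relation `R`. -/
def degSnd [DecidableEq α] [DecidableEq β] (R : Finset (α × β)) (y : β) : ℕ :=
  (R.filter fun t => t.2 = y).card

/-- Degree of the value `y` in the first coordinate of the binary relation `S`. -/
def degFst [DecidableEq β] [DecidableEq γ] (S : Finset (β × γ)) (y : β) : ℕ :=
  (S.filter fun t => t.1 = y).card

/-- The `ℓ_p`-norm (`0 < p < ∞`) of the degree sequence `deg_R(X|Y)`, conditioned on the
second coordinate. -/
def lpSnd [DecidableEq α] [DecidableEq β] (R : Finset (α × β)) (p : ℝ) : ℝ :=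
  (∑ y ∈ R.image Prod.snd, (degSnd R y : ℝ) ^ p) ^ (1 / p)

/-- The `ℓ_p`-norm (`0 < p < ∞`) of the degree sequence `deg_S(Z|Y)`, conditioned on the
first coordinate. -/
def lpFst [DecidableEq β] [DecidableEq γ] (S : Finset (β × γ)) (p : ℝ) : ℝ :=
  (∑ y ∈ S.image Prod.fst, (degFst S y : ℝ) ^ p) ^ (1 / p)

/-- The join `Q = {(x, y, z) : (x, y) ∈ R ∧ (y, z) ∈ S}`. -/
def join [DecidableEq α] [DecidableEq β] [DecidableEq γ]
    (R : Finset (α × β)) (S : Finset (β × γ)) : Finset (α × β × γ) :=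
  ((R ×ˢ S).filter fun t => t.1.2 = t.2.1).image fun t => (t.1.1, t.1.2, t.2.2)

end

/-- Three-factor weighted Hölder inequality for positive summands. -/
theorem holder3 {ι : Type*} (T : Finset ι) (f g h : ι → ℝ) (u v w : ℝ)
    (hf : ∀ i ∈ T, 0 < f i) (hg : ∀ i ∈ T, 0 < g i) (hh : ∀ i ∈ T, 0 < h i)
    (hu : 0 ≤ u) (hv : 0 ≤ v) (hw : 0 ≤ w) (huvw : u + v + w = 1) :
    ∑ i ∈ T, f i ^ u * g i ^ v * h i ^ w
      ≤ (∑ i ∈ T, f i) ^ u * (∑ i ∈ T, g i) ^ v * (∑ i ∈ T, h i) ^ w := by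
  rcases T.eq_empty_or_nonempty with rfl | hT
  · simp only [Finset.sum_empty]
    positivity
  have hA := Finset.sum_pos hf hT
  have hB := Finset.sum_pos hg hT
  have hC := Finset.sum_pos hh hT
  set A := ∑ i ∈ T, f i with hAd
  set B := ∑ i ∈ T, g i with hBd
  set C := ∑ i ∈ T, h i with hCd
  have key : ∀ i ∈ T, f i ^ u * g i ^ v * h i ^ w
      ≤ (A ^ u * B ^ v * C ^ w) * (u * (f i / A) + v * (g i / B) + w * (h i / C)) := by
    intro i hi
    have h1 := hf i hi
    have h2 := hg i hi
    have h3 := hh i hi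
    have := Real.geom_mean_le_arith_mean3_weighted hu hv hw
      (div_pos h1 hA).le (div_pos h2 hB).le (div_pos h3 hC).le huvw
    rw [Real.div_rpow h1.le hA.le, Real.div_rpow h2.le hB.le, Real.div_rpow h3.le hC.le] at this
    have hP : 0 < A ^ u * B ^ v * C ^ w := by positivity
    have hAu : A ^ u ≠ 0 := by positivity
    have hBu : B ^ v ≠ 0 := by positivity
    have hCu : C ^ w ≠ 0 := by positivity
    calc f i ^ u * g i ^ v * h i ^ w
        = (A ^ u * B ^ v * C ^ w) * (f i ^ u / A ^ u * (g i ^ v / B ^ v) * (h i ^ w / C ^ w)) := by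
          field_simp
      _ ≤ _ := mul_le_mul_of_nonneg_left this hP.le
  refine (Finset.sum_le_sum key).trans ?_
  rw [← Finset.mul_sum, Finset.sum_add_distrib, Finset.sum_add_distrib, ← Finset.mul_sum,
    ← Finset.mul_sum, ← Finset.mul_sum, ← Finset.sum_div, ← Finset.sum_div, ← Finset.sum_div,
    ← hAd, ← hBd, ← hCd, div_self hA.ne', div_self hB.ne', div_self hC.ne']
  simp [huvw]

theorem card_join_le {α β γ : Type*} [DecidableEq α] [DecidableEq β] [DecidableEq γ]
    (R : Finset (α × β)) (S : Finset (β × γ)) :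
    (join R S).card ≤ ∑ y ∈ R.image Prod.snd ∩ S.image Prod.fst, degSnd R y * degFst S y := by
  have hsub : ((R ×ˢ S).filter fun t => t.1.2 = t.2.1) ⊆
      (R.image Prod.snd ∩ S.image Prod.fst).biUnion
        fun y => (R.filter fun t => t.2 = y) ×ˢ (S.filter fun t => t.1 = y) := by
    rintro ⟨⟨a, b⟩, ⟨b', c⟩⟩ ht
    simp only [Finset.mem_filter, Finset.mem_product] at ht
    obtain ⟨⟨h1, h2⟩, rfl⟩ := ht
    simp only [Finset.mem_biUnion, Finset.mem_inter, Finset.mem_image, Finset.mem_product,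
      Finset.mem_filter]
    exact ⟨b, ⟨⟨_, h1, rfl⟩, ⟨_, h2, rfl⟩⟩, ⟨h1, rfl⟩, ⟨h2, rfl⟩⟩
  refine Finset.card_image_le.trans ((Finset.card_le_card hsub).trans
    (Finset.card_biUnion_le.trans (le_of_eq ?_)))
  simp only [Finset.card_product, degSnd, degFst]

/-- **single join bound.** For reals `p > 0` and `q > 1` with `1/p + 1/q ≤ 1`:
`|Q| ≤ ‖deg_R(X|Y)‖_p · ‖deg_S(Z|Y)‖_q^{q/(p(q−1))} · |S|^{1 − q/(p(q−1))}`. -/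
theorem single_join_bound' {α β γ : Type*} [DecidableEq α] [DecidableEq β] [DecidableEq γ]
    (R : Finset (α × β)) (S : Finset (β × γ))
    (p q : ℝ) (hp : 0 < p) (hq : 1 < q) (hpq : 1 / p + 1 / q ≤ 1) :
    ((join R S).card : ℝ)
      ≤ lpSnd R p * (lpFst S q) ^ (q / (p * (q - 1)))
          * ((S.card : ℝ)) ^ (1 - q / (p * (q - 1))) := by
  set θ := q / (p * (q - 1)) with hθ
  have hq1 : 0 < q - 1 := by linarith
  have hq0 : 0 < q := by linarith
  have hθ0 : 0 ≤ θ := by positivity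
  have hθ1 : θ ≤ 1 := by
    rw [hθ, div_le_one (by positivity)]
    have : 1 / p + 1 / q = (q + p) / (p * q) := by field_simp
    rw [this, div_le_one (by positivity)] at hpq
    linarith
  have hsum : 1 / p + θ / q + (1 - θ) = 1 := by
    rw [hθ]; field_simp; ring
  set T := R.image Prod.snd ∩ S.image Prod.fst with hT
  have ha : ∀ y ∈ T, (0 : ℝ) < degSnd R y := by
    intro y hy
    obtain ⟨t, ht, rfl⟩ := Finset.mem_image.1 (Finset.mem_inter.1 hy).1
    exact Nat.cast_pos.2 (Finset.card_pos.2 ⟨t, Finset.mem_filter.2 ⟨ht, rfl⟩⟩)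
  have hb : ∀ y ∈ T, (0 : ℝ) < degFst S y := by
    intro y hy
    obtain ⟨t, ht, rfl⟩ := Finset.mem_image.1 (Finset.mem_inter.1 hy).2
    exact Nat.cast_pos.2 (Finset.card_pos.2 ⟨t, Finset.mem_filter.2 ⟨ht, rfl⟩⟩)
  have hcard : (S.card : ℝ) = ∑ y ∈ S.image Prod.fst, (degFst S y : ℝ) := by
    rw [← Nat.cast_sum]
    congr 1
    exact Finset.card_eq_sum_card_image Prod.fst S
  have h1 : ((join R S).card : ℝ) ≤ ∑ y ∈ T, (degSnd R y : ℝ) * (degFst S y : ℝ) := by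
    exact_mod_cast card_join_le R S
  have h2 : ∑ y ∈ T, (degSnd R y : ℝ) * (degFst S y : ℝ)
      = ∑ y ∈ T, ((degSnd R y : ℝ) ^ p) ^ (1 / p) * ((degFst S y : ℝ) ^ q) ^ (θ / q)
          * (degFst S y : ℝ) ^ (1 - θ) := by
    refine Finset.sum_congr rfl fun y hy => ?_
    have h3 := ha y hy
    have h4 := hb y hy
    rw [← Real.rpow_mul h3.le, ← Real.rpow_mul h4.le, mul_one_div_cancel hp.ne', Real.rpow_one,
      mul_div_cancel₀ _ hq0.ne', mul_assoc, ← Real.rpow_add h4]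
    simp
  have h3 := holder3 T (fun y => (degSnd R y : ℝ) ^ p) (fun y => (degFst S y : ℝ) ^ q)
    (fun y => (degFst S y : ℝ)) (1 / p) (θ / q) (1 - θ)
    (fun y hy => Real.rpow_pos_of_pos (ha y hy) _) (fun y hy => Real.rpow_pos_of_pos (hb y hy) _)
    hb (by positivity) (by positivity) (by linarith) hsum
  refine (h1.trans (h2.le.trans h3)).trans ?_
  have h5 : (lpFst S q) ^ θ = (∑ y ∈ S.image Prod.fst, (degFst S y : ℝ) ^ q) ^ (θ / q) := by
    rw [lpFst, ← Real.rpow_mul (Finset.sum_nonneg fun _ _ => by positivity)]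
    congr 1
    ring
  rw [h5, hcard, lpSnd]
  have hw : 0 ≤ 1 - θ := by linarith
  have hTR : T ⊆ R.image Prod.snd := Finset.inter_subset_left
  have hTS : T ⊆ S.image Prod.fst := Finset.inter_subset_right
  have e1 := Finset.sum_le_sum_of_subset_of_nonneg (f := fun y => (degSnd R y : ℝ) ^ p) hTR
    (fun _ _ _ => by positivity)
  have e2 := Finset.sum_le_sum_of_subset_of_nonneg (f := fun y => (degFst S y : ℝ) ^ q) hTS
    (fun _ _ _ => by positivity)
  have e3 := Finset.sum_le_sum_of_subset_of_nonneg (f := fun y => (degFst S y : ℝ)) hTS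
    (fun _ _ _ => by positivity)
  gcongr

end JoinBounds
end
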